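/- Let S be a measurable space and let P and Q be probability kernels from S to ℝ^d with finite first moments. Then P_θ ≤icx Q_θ holds for every θ ∈ S if and only if P and Q admit a pointwise coupling R such that R_θ is a submartingale coupling for every θ ∈ S. -/

import Mathlib

open MeasureTheory ProbabilityTheory Filter

noncomputable section

abbrev Euc (d : ℕ) : Type := EuclideanSpace ℝ (Fin d)

def FiniteFirstMoment {d : ℕ} (μ : Measure (Euc d)) : Prop :=
  Integrable (fun x => x) μ

def ConvexOrder {d : ℕ} (μ ν : Measure (Euc d)) : Prop :=
  ∀ φ : Euc d → ℝ, ConvexOn ℝ Set.univ φ → Integrable φ μ → Integrable φ ν →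
    ∫ x, φ x ∂μ ≤ ∫ x, φ x ∂ν

def CoordMono {d : ℕ} (φ : Euc d → ℝ) : Prop :=
  ∀ x y : Euc d, (∀ i, x i ≤ y i) → φ x ≤ φ y

def IncConvexOrder {d : ℕ} (μ ν : Measure (Euc d)) : Prop :=
  ∀ φ : Euc d → ℝ, ConvexOn ℝ Set.univ φ → CoordMono φ → Integrable φ μ → Integrable φ ν →
    ∫ x, φ x ∂μ ≤ ∫ x, φ x ∂ν

def IsCoupling {d : ℕ} (lam : Measure (Euc d × Euc d)) (μ ν : Measure (Euc d)) : Prop :=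
  lam.map Prod.fst = μ ∧ lam.map Prod.snd = ν

def fstSigma (d : ℕ) : MeasurableSpace (Euc d × Euc d) :=
  MeasurableSpace.comap Prod.fst inferInstance

def IsMartingaleCoupling {d : ℕ} (lam : Measure (Euc d × Euc d)) : Prop :=
  lam[(fun p : Euc d × Euc d => p.2) | fstSigma d] =ᵐ[lam] (fun p => p.1)

def IsSubmartingaleCoupling {d : ℕ} (lam : Measure (Euc d × Euc d)) : Prop :=
  ∀ᵐ p ∂lam, ∀ i, p.1 i ≤ (lam[(fun q : Euc d × Euc d => q.2) | fstSigma d]) p i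

section Abstract

variable {Z : Type} [TopologicalSpace Z] [CompactSpace Z] [TopologicalSpace.MetrizableSpace Z]
  [MeasurableSpace Z] [BorelSpace Z]

theorem cint (f : C(Z, ℝ)) (l : ProbabilityMeasure Z) : Integrable f (l : Measure Z) :=
  f.continuous.integrable_of_hasCompactSupport (HasCompactSupport.of_compactSpace f)

theorem feas_fin {ι : Type} [Fintype ι] (h : ι → C(Z, ℝ)) (b : ι → ℝ)
    (H : ∀ w : ι → ℝ, (∀ i, 0 ≤ w i) → ∃ z, ∑ i, w i * h i z ≤ ∑ i, w i * b i) :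
    ∃ l : ProbabilityMeasure Z, ∀ i, ∫ z, h i z ∂(l : Measure Z) ≤ b i := by
  classical
  by_contra hcon
  set G : ProbabilityMeasure Z → (ι → ℝ) := fun l i => ∫ z, h i z ∂(l : Measure Z) with hG
  have hGc : Continuous G := continuous_pi fun i =>
    ProbabilityMeasure.continuous_integral_continuousMap (h i)
  have hcomp : IsCompact (Set.range G) := isCompact_range hGc
  have hconv : Convex ℝ (Set.range G) := by
    rintro _ ⟨l, rfl⟩ _ ⟨m, rfl⟩ s t hs ht hst
    have : IsProbabilityMeasure (ENNReal.ofReal s • (l : Measure Z)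
        + ENNReal.ofReal t • (m : Measure Z)) := by
      constructor
      simp [← ENNReal.ofReal_add hs ht, hst]
    refine ⟨⟨_, this⟩, ?_⟩
    funext i
    simp only [hG, ProbabilityMeasure.coe_mk, Pi.add_apply, Pi.smul_apply, smul_eq_mul]
    rw [integral_add_measure, integral_smul_measure, integral_smul_measure]
    · simp [ENNReal.toReal_ofReal, hs, ht]
    · exact (cint (h i) l).smul_measure (by simp)
    · exact (cint (h i) m).smul_measure (by simp)
  have hdisj : Disjoint (Set.range G) (Set.Iic b) := by
    rw [Set.disjoint_left]
    rintro _ ⟨l, rfl⟩ hl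
    exact hcon ⟨l, fun i => hl i⟩
  obtain ⟨f, u, v, h1, huv, h2⟩ :=
    geometric_hahn_banach_compact_closed hconv hcomp (convex_Iic b) isClosed_Iic hdisj
  have hf : ∀ x : ι → ℝ, f x = ∑ i, x i * f (Pi.single i 1) := by
    intro x
    conv_lhs => rw [pi_eq_sum_univ' x]
    rw [map_sum]
    refine Finset.sum_congr rfl fun i _ => ?_
    rw [map_smul, smul_eq_mul]
  have hc : ∀ i, f (Pi.single i 1) ≤ 0 := by
    intro i
    by_contra hpos
    push Not at hpos
    obtain ⟨n, hn⟩ := exists_nat_gt ((f b - v) / f (Pi.single i 1))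
    rw [div_lt_iff₀ hpos] at hn
    have := h2 (b - (n : ℝ) • Pi.single i (1 : ℝ)) (by
      simp only [Set.mem_Iic]
      intro j
      by_cases hj : j = i
      · subst hj; simp
      · simp [hj])
    rw [map_sub, map_smul, smul_eq_mul] at this
    linarith
  obtain ⟨z, hz⟩ := H (fun i => - f (Pi.single i 1)) (fun i => by linarith [hc i])
  have hb := h2 b (by simp)
  have hd := h1 (G ⟨Measure.dirac z, inferInstance⟩) ⟨_, rfl⟩
  rw [hf] at hb hd
  simp only [hG, ProbabilityMeasure.coe_mk] at hd
  have : ∀ i, ∫ x, h i x ∂(Measure.dirac z) = h i z := fun i =>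
    integral_dirac' _ _ (h i).continuous.stronglyMeasurable
  simp only [this] at hd
  simp only [neg_mul, Finset.sum_neg_distrib, neg_le_neg_iff] at hz
  simp only [mul_comm (f _)] at hz
  linarith

theorem feas_iff [Nonempty Z] {ι : Type} (h : ι → C(Z, ℝ)) (b : ι → ℝ) :
    (∃ l : ProbabilityMeasure Z, ∀ i, ∫ z, h i z ∂(l : Measure Z) ≤ b i) ↔
    ∀ w : ι →₀ ℕ, ∃ z, ∑ i ∈ w.support, (w i : ℝ) * h i z ≤ ∑ i ∈ w.support, (w i : ℝ) * b i := by
  classical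
  constructor
  · rintro ⟨l, hl⟩ w
    have hinteg : Integrable (fun z => ∑ i ∈ w.support, (w i : ℝ) * h i z) (l : Measure Z) :=
      integrable_finsetSum _ fun i _ => (cint (h i) l).const_mul _
    obtain ⟨z, hz⟩ := exists_le_integral hinteg
    refine ⟨z, hz.trans ?_⟩
    rw [integral_finsetSum _ fun i _ => (cint (h i) l).const_mul _]
    refine Finset.sum_le_sum fun i _ => ?_
    rw [integral_const_mul]
    exact mul_le_mul_of_nonneg_left (hl i) (by positivity)
  · intro H
    have key : ∀ s : Finset ι,
        ∃ l : ProbabilityMeasure Z, ∀ i : s, ∫ z, h i z ∂(l : Measure Z) ≤ b i := by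
      intro s
      refine feas_fin (fun i : s => h i) (fun i => b i) fun w hw => ?_
      by_contra hcon
      push Not at hcon
      -- compactness
      set F : C(Z, ℝ) := ∑ i : s, (w i) • (h i - ContinuousMap.const Z (b i)) with hF
      have hFa : ∀ z, F z = ∑ i : s, w i * (h i z - b i) := by
        intro z; simp [hF]
      obtain ⟨z0, -, hz0⟩ := isCompact_univ.exists_isMinOn Set.univ_nonempty
        F.continuous.continuousOn
      have hδ : 0 < F z0 := by
        rw [hFa]
        simp only [mul_sub, Finset.sum_sub_distrib]
        linarith [hcon z0]
      have hmin : ∀ z, F z0 ≤ F z := fun z => hz0 (Set.mem_univ z)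
      set M : ℝ := ∑ i : s, ‖h i - ContinuousMap.const Z (b i)‖ with hM
      obtain ⟨T, hT⟩ := exists_nat_gt (M / F z0)
      rw [div_lt_iff₀ hδ] at hT
      let w' : ι →₀ ℕ := Finsupp.onFinset s
        (fun i => if hi : i ∈ s then ⌊(T : ℝ) * w ⟨i, hi⟩⌋₊ else 0)
        (by intro i hi; by_contra h'; simp [h'] at hi)
      obtain ⟨z, hz⟩ := H w'
      have e1 : ∀ g : ι → ℝ, ∑ i ∈ w'.support, (w' i : ℝ) * g i
          = ∑ i : s, (⌊(T : ℝ) * w i⌋₊ : ℝ) * g i := by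
        intro g
        rw [Finset.sum_subset (Finsupp.support_onFinset_subset : w'.support ⊆ s)]
        · rw [← Finset.sum_coe_sort]
          refine Finset.sum_congr rfl fun i _ => ?_
          simp [w']
        · intro i _ hi
          rw [Finsupp.notMem_support_iff.1 hi]
          simp
      rw [e1 (fun i => h i z), e1] at hz
      have e2 : ∀ i : s, (T : ℝ) * (w i * (h i z - b i)) - ‖h i - ContinuousMap.const Z (b i)‖
          ≤ (⌊(T : ℝ) * w i⌋₊ : ℝ) * (h i z - b i) := by
        intro i
        have hn : |h i z - b i| ≤ ‖h i - ContinuousMap.const Z (b i)‖ := by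
          simpa using (h i - ContinuousMap.const Z (b i)).norm_coe_le_norm z
        have f1 := Nat.floor_le (mul_nonneg (Nat.cast_nonneg T) (hw i))
        have f2 := Nat.lt_floor_add_one ((T : ℝ) * w i)
        have : ((T : ℝ) * w i - ⌊(T : ℝ) * w i⌋₊) * (h i z - b i) ≤ |h i z - b i| := by
          calc _ ≤ |((T : ℝ) * w i - ⌊(T : ℝ) * w i⌋₊) * (h i z - b i)| := le_abs_self _
            _ = |(T : ℝ) * w i - ⌊(T : ℝ) * w i⌋₊| * |h i z - b i| := abs_mul _ _
            _ ≤ 1 * |h i z - b i| := by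
              refine mul_le_mul_of_nonneg_right ?_ (abs_nonneg _)
              rw [abs_le]; constructor <;> linarith
            _ = _ := one_mul _
        nlinarith
      have e3 := Finset.sum_le_sum fun i (_ : i ∈ (Finset.univ : Finset s)) => e2 i
      rw [Finset.sum_sub_distrib, ← Finset.mul_sum, ← hFa, ← hM] at e3
      simp only [mul_sub, Finset.sum_sub_distrib] at e3
      have := mul_le_mul_of_nonneg_left (hmin z) (Nat.cast_nonneg (α := ℝ) T)
      linarith
    have hcl : ∀ i, IsClosed {l : ProbabilityMeasure Z | ∫ z, h i z ∂(l : Measure Z) ≤ b i} :=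
      fun i => isClosed_le (ProbabilityMeasure.continuous_integral_continuousMap (h i))
        continuous_const
    have := isCompact_univ.inter_iInter_nonempty
      (fun i => {l : ProbabilityMeasure Z | ∫ z, h i z ∂(l : Measure Z) ≤ b i}) hcl (by
        intro s
        obtain ⟨l, hl⟩ := key s
        exact ⟨l, Set.mem_univ _, by simpa using hl⟩)
    obtain ⟨l, -, hl⟩ := this
    exact ⟨l, by simpa using hl⟩

variable {S : Type} [MeasurableSpace S]

theorem meas_feas [Nonempty Z] {ι : Type} [Countable ι] (h : ι → C(Z, ℝ)) (b : ι → S → ℝ)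
    (hb : ∀ i, Measurable (b i)) :
    MeasurableSet {θ | ∃ l : ProbabilityMeasure Z, ∀ i, ∫ z, h i z ∂(l : Measure Z) ≤ b i θ} := by
  classical
  have : Countable (ι →₀ ℕ) := inferInstance
  simp only [fun θ => feas_iff h (fun i => b i θ), Set.ofPred_forall]
  refine MeasurableSet.iInter fun w => ?_
  have hcont : Continuous (fun z => ∑ i ∈ w.support, (w i : ℝ) * h i z) := by fun_prop
  obtain ⟨z0, -, hz0⟩ := isCompact_univ.exists_isMinOn Set.univ_nonempty hcont.continuousOn
  have : {θ | ∃ z, ∑ i ∈ w.support, (w i : ℝ) * h i z ≤ ∑ i ∈ w.support, (w i : ℝ) * b i θ}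
      = {θ | ∑ i ∈ w.support, (w i : ℝ) * h i z0 ≤ ∑ i ∈ w.support, (w i : ℝ) * b i θ} := by
    ext θ
    constructor
    · rintro ⟨z, hz⟩
      exact (hz0 (Set.mem_univ z)).trans hz
    · intro hz
      exact ⟨z0, hz⟩
  rw [this]
  exact measurableSet_le measurable_const
    (Finset.measurable_sum _ fun i _ => (hb i).const_mul _)

def IsGood (K : S → Set (ProbabilityMeasure Z)) : Prop :=
  ∃ (h : ℕ → C(Z, ℝ)) (b : ℕ → S → ℝ), (∀ n, Measurable (b n)) ∧
    ∀ θ, K θ = {l : ProbabilityMeasure Z | ∀ n, ∫ z, h n z ∂(l : Measure Z) ≤ b n θ}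

/-- minimal value of the integral of `f` over `K θ`. -/
def minVal (K : S → Set (ProbabilityMeasure Z)) (f : C(Z, ℝ)) (θ : S) : ℝ :=
  sInf ((fun l : ProbabilityMeasure Z => ∫ z, f z ∂(l : Measure Z)) '' K θ)

theorem IsGood.isClosed {K : S → Set (ProbabilityMeasure Z)} (hK : IsGood K) (θ : S) :
    IsClosed (K θ) := by
  obtain ⟨h, b, hb, hK⟩ := hK
  rw [hK, Set.ofPred_forall]
  exact isClosed_iInter fun n =>
    isClosed_le (ProbabilityMeasure.continuous_integral_continuousMap (h n)) continuous_const

theorem IsGood.minVal_spec {K : S → Set (ProbabilityMeasure Z)} (hK : IsGood K)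
    (hne : ∀ θ, (K θ).Nonempty) (f : C(Z, ℝ)) (θ : S) :
    (∃ l ∈ K θ, ∫ z, f z ∂(l : Measure Z) = minVal K f θ) ∧
      ∀ l ∈ K θ, minVal K f θ ≤ ∫ z, f z ∂(l : Measure Z) := by
  have hc : IsCompact ((fun l : ProbabilityMeasure Z => ∫ z, f z ∂(l : Measure Z)) '' K θ) :=
    (hK.isClosed θ).isCompact.image (ProbabilityMeasure.continuous_integral_continuousMap f)
  refine ⟨?_, fun l hl => csInf_le hc.bddBelow ⟨l, hl, rfl⟩⟩
  exact hc.sInf_mem ((hne θ).image _)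

theorem IsGood.measurable_minVal [Nonempty Z] {K : S → Set (ProbabilityMeasure Z)} (hK : IsGood K)
    (hne : ∀ θ, (K θ).Nonempty) (f : C(Z, ℝ)) : Measurable (minVal K f) := by
  refine measurable_of_Iic fun c => ?_
  have hspec := hK.minVal_spec hne f
  obtain ⟨h, b, hb, hKeq⟩ := hK
  have := meas_feas (S := S) (ι := Option ℕ) (fun o => o.elim f h)
    (fun o => o.elim (fun _ => c) b) (by
      rintro (_ | n)
      · exact measurable_const
      · exact hb n)
  convert this using 1
  ext θ
  simp only [Set.mem_preimage, Set.mem_Iic, Set.mem_ofPred_eq, Option.forall, Option.elim]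
  constructor
  · intro hle
    obtain ⟨l, hl, hl'⟩ := (hspec θ).1
    rw [hKeq] at hl
    exact ⟨l, hl'.trans_le hle, hl⟩
  · rintro ⟨l, h1, h2⟩
    exact ((hspec θ).2 l (by rw [hKeq]; exact h2)).trans h1

/-- one lexicographic minimization step -/
def stepK (K : S → Set (ProbabilityMeasure Z)) (f : C(Z, ℝ)) : S → Set (ProbabilityMeasure Z) :=
  fun θ => {l | l ∈ K θ ∧ ∫ z, f z ∂(l : Measure Z) ≤ minVal K f θ}

theorem IsGood.step [Nonempty Z] {K : S → Set (ProbabilityMeasure Z)} (hK : IsGood K)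
    (hne : ∀ θ, (K θ).Nonempty) (f : C(Z, ℝ)) :
    IsGood (stepK K f) ∧ ∀ θ, (stepK K f θ).Nonempty := by
  constructor
  · have hm := hK.measurable_minVal hne f
    obtain ⟨h, b, hb, hKeq⟩ := hK
    refine ⟨fun n => Nat.casesOn n f h, fun n => Nat.casesOn n (minVal K f) b, ?_, ?_⟩
    · rintro (_ | n)
      · exact hm
      · exact hb n
    · intro θ
      ext l
      simp only [stepK, hKeq, Set.mem_ofPred_eq]
      constructor
      · rintro ⟨h1, h2⟩ (_ | n)
        · simpa [minVal, hKeq] using h2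
        · exact h1 n
      · intro h1
        refine ⟨fun n => h1 (n + 1), by simpa [minVal, hKeq] using h1 0⟩
  · intro θ
    obtain ⟨l, hl, hl'⟩ := (hK.minVal_spec hne f θ).1
    exact ⟨l, hl, hl'.le⟩

def iterK (K : S → Set (ProbabilityMeasure Z)) (f : ℕ → C(Z, ℝ)) :
    ℕ → S → Set (ProbabilityMeasure Z)
  | 0 => K
  | n + 1 => stepK (iterK K f n) (f n)

theorem iterK_good [Nonempty Z] {K : S → Set (ProbabilityMeasure Z)} (hK : IsGood K)
    (hne : ∀ θ, (K θ).Nonempty) (f : ℕ → C(Z, ℝ)) (n : ℕ) :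
    IsGood (iterK K f n) ∧ ∀ θ, (iterK K f n θ).Nonempty := by
  induction n with
  | zero => exact ⟨hK, hne⟩
  | succ n ih => exact ih.1.step ih.2 (f n)

theorem selection [Nonempty Z] {K : S → Set (ProbabilityMeasure Z)} (hK : IsGood K)
    (hne : ∀ θ, (K θ).Nonempty) :
    ∃ R : S → ProbabilityMeasure Z, (∀ θ, R θ ∈ K θ) ∧
      Measurable (fun θ => (R θ : Measure Z)) := by
  let _ : MetricSpace Z := TopologicalSpace.metrizableSpaceMetric Z
  set f : ℕ → C(Z, ℝ) := TopologicalSpace.denseSeq C(Z, ℝ) with hf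
  have good := iterK_good hK hne f
  have hnon : ∀ θ, (⋂ n, iterK K f n θ).Nonempty := by
    intro θ
    refine IsCompact.nonempty_iInter_of_sequence_nonempty_isCompact_isClosed _ ?_
      (fun n => (good n).2 θ) ((good 0).1.isClosed θ).isCompact (fun n => (good n).1.isClosed θ)
    intro n l hl
    exact hl.1
  choose R hR using hnon
  simp only [Set.mem_iInter] at hR
  refine ⟨R, fun θ => hR θ 0, ?_⟩
  have hval : ∀ n θ, ∫ z, f n z ∂(R θ : Measure Z) = minVal (iterK K f n) (f n) θ := by
    intro n θ
    refine le_antisymm (hR θ (n + 1)).2 (((good n).1.minVal_spec (good n).2 (f n) θ).2 _ (hR θ n))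
  have hmeas : ∀ n, Measurable fun θ => ∫ z, f n z ∂(R θ : Measure Z) := by
    intro n
    simp only [hval]
    exact (good n).1.measurable_minVal (good n).2 (f n)
  have hmeas' : ∀ g : C(Z, ℝ), Measurable fun θ => ∫ z, g z ∂(R θ : Measure Z) := by
    intro g
    obtain ⟨u, hu, hlim⟩ := mem_closure_iff_seq_limit.1
      ((TopologicalSpace.denseRange_denseSeq C(Z, ℝ)) g)
    choose k hk using hu
    refine measurable_of_tendsto_metrizable (f := fun n θ => ∫ z, f (k n) z ∂(R θ : Measure Z))
      (fun n => hmeas (k n)) ?_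
    rw [tendsto_pi_nhds]
    intro θ
    rw [tendsto_iff_norm_sub_tendsto_zero] at hlim ⊢
    refine squeeze_zero (fun _ => norm_nonneg _) (fun n => ?_) hlim
    rw [← integral_sub (cint _ _) (cint _ _)]
    refine (norm_integral_le_of_norm_le_const (C := ‖u n - g‖) (ae_of_all _ fun z => ?_)).trans ?_
    · rw [← hk n]
      exact (f (k n) - g).norm_coe_le_norm z
    · simp
  refine Measurable.measure_of_isPiSystem_of_isProbabilityMeasure
    (borel_eq_generateFrom_isClosed (α := Z) ▸ BorelSpace.measurable_eq) isPiSystem_isClosed ?_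
  intro F hF
  have hF : IsClosed F := hF
  have hap := fun θ => tendsto_lintegral_of_dominated_convergence (μ := (R θ : Measure Z))
    (F := fun n z => (hF.apprSeq n z : ENNReal)) (f := F.indicator 1) (fun _ => 1)
    (fun n => (by fun_prop)) (fun n => ae_of_all _ fun z => (by
      simpa using HasOuterApproxClosed.apprSeq_apply_le_one hF n z)) (by simp)
    (ae_of_all _ fun z => (by
      have := HasOuterApproxClosed.tendsto_apprSeq hF
      rw [tendsto_pi_nhds] at this
      have h2 := (ENNReal.continuous_coe.tendsto _).comp (this z)
      have e : F.indicator (1 : Z → ENNReal) z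
          = ((F.indicator (fun _ => (1 : NNReal)) z : NNReal) : ENNReal) := by
        by_cases hz : z ∈ F <;> simp [hz]
      rw [e]
      exact h2))
  refine measurable_of_tendsto_metrizable
    (f := fun n θ => ∫⁻ z, (hF.apprSeq n z : ENNReal) ∂(R θ : Measure Z)) (fun n => ?_) ?_
  · have h1 := hmeas' ⟨fun z => (hF.apprSeq n z : ℝ), by fun_prop⟩
    have h2 : (fun θ => ∫⁻ z, (hF.apprSeq n z : ENNReal) ∂(R θ : Measure Z)) =
        fun θ => ENNReal.ofReal (∫ z, (hF.apprSeq n z : ℝ) ∂(R θ : Measure Z)) := by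
      funext θ
      rw [ofReal_integral_eq_lintegral_ofReal]
      · simp
      · exact cint ⟨fun z => (hF.apprSeq n z : ℝ), by fun_prop⟩ (R θ)
      · exact ae_of_all _ fun z => NNReal.coe_nonneg _
    rw [h2]
    exact h1.ennreal_ofReal
  · rw [tendsto_pi_nhds]
    intro θ
    have := hap θ
    rwa [lintegral_indicator_one hF.measurableSet] at this

end Abstract

theorem fstSigma_le (d : ℕ) :
    fstSigma d ≤ (inferInstance : MeasurableSpace (Euc d × Euc d)) :=
  measurable_fst.comap_le

theorem continuous_of_convex {d : ℕ} {φ : Euc d → ℝ} (h : ConvexOn ℝ Set.univ φ) :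
    Continuous φ :=
  continuousOn_univ.1 (h.continuousOn isOpen_univ)

theorem easy_dir {d : ℕ} {μ ν : Measure (Euc d)} [IsProbabilityMeasure μ]
    (hν : FiniteFirstMoment ν) (Γ : Measure (Euc d × Euc d)) [IsProbabilityMeasure Γ]
    (hc : IsCoupling Γ μ ν) (hs : IsSubmartingaleCoupling Γ) : IncConvexOrder μ ν := by
  intro φ hφ hmono hμi hνi
  obtain ⟨h1, h2⟩ := hc
  have hcont := continuous_of_convex hφ
  have hY : Integrable (fun q : Euc d × Euc d => q.2) Γ := by
    have : Integrable (fun x : Euc d => x) (Γ.map Prod.snd) := by rw [h2]; exact hν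
    exact this.comp_measurable measurable_snd
  have hφX : Integrable (fun q : Euc d × Euc d => φ q.1) Γ := by
    rw [← h1] at hμi
    exact hμi.comp_measurable measurable_fst
  have hφY : Integrable (φ ∘ fun q : Euc d × Euc d => q.2) Γ := by
    rw [← h2] at hνi
    exact hνi.comp_measurable measurable_snd
  have hJ := hφ.map_condExp_le_univ (fstSigma_le d) hcont.lowerSemicontinuous hY hφY
  have e1 : ∫ x, φ x ∂μ = ∫ q, φ q.1 ∂Γ := by
    rw [← h1, integral_map measurable_fst.aemeasurable hcont.aestronglyMeasurable]
  have e2 : ∫ x, φ x ∂ν = ∫ q, (φ ∘ fun q : Euc d × Euc d => q.2) q ∂Γ := by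
    rw [← h2, integral_map measurable_snd.aemeasurable hcont.aestronglyMeasurable]
    rfl
  rw [e1, e2, ← integral_condExp (fstSigma_le d) (f := φ ∘ fun q : Euc d × Euc d => q.2)]
  refine integral_mono_ae hφX integrable_condExp ?_
  filter_upwards [hJ, hs] with p hp1 hp2
  exact (hmono _ _ hp2).trans hp1

/-- Dual domination of a cost function. -/
def Dom {d : ℕ} (μ ν : Measure (Euc d)) (H : Euc d → Euc d → ℝ) (c : ℝ) : Prop :=
  ∃ (u v : Euc d → ℝ) (G : Euc d → Fin d → ℝ), Integrable u μ ∧ Integrable v ν ∧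
    (∀ x j, 0 ≤ G x j) ∧ (∃ C, ∀ x j, G x j ≤ C) ∧
    (∀ x y, H x y ≤ u x + v y + ∑ j, G x j * (x j - y j)) ∧
    ∫ x, u x ∂μ + ∫ y, v y ∂ν ≤ c

theorem Dom.zero {d : ℕ} (μ ν : Measure (Euc d)) : Dom μ ν (fun _ _ => 0) 0 :=
  ⟨fun _ => 0, fun _ => 0, fun _ _ => 0, integrable_zero _ _ _, integrable_zero _ _ _,
    fun _ _ => le_rfl, ⟨0, fun _ _ => le_rfl⟩, by simp, by simp⟩

theorem Dom.add {d : ℕ} {μ ν : Measure (Euc d)} {H H' : Euc d → Euc d → ℝ} {c c' : ℝ}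
    (h : Dom μ ν H c) (h' : Dom μ ν H' c') : Dom μ ν (fun x y => H x y + H' x y) (c + c') := by
  obtain ⟨u, v, G, hu, hv, hG, ⟨C, hC⟩, hH, hc⟩ := h
  obtain ⟨u', v', G', hu', hv', hG', ⟨C', hC'⟩, hH', hc'⟩ := h'
  refine ⟨fun x => u x + u' x, fun x => v x + v' x, fun x j => G x j + G' x j, hu.add hu',
    hv.add hv', fun x j => add_nonneg (hG x j) (hG' x j),
    ⟨C + C', fun x j => add_le_add (hC x j) (hC' x j)⟩, fun x y => ?_, ?_⟩
  · simp only [add_mul, Finset.sum_add_distrib]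
    linarith [hH x y, hH' x y]
  · rw [integral_add hu hu', integral_add hv hv']
    linarith

theorem Dom.mul {d : ℕ} {μ ν : Measure (Euc d)} {H : Euc d → Euc d → ℝ} {c : ℝ}
    (h : Dom μ ν H c) {w : ℝ} (hw : 0 ≤ w) : Dom μ ν (fun x y => w * H x y) (w * c) := by
  obtain ⟨u, v, G, hu, hv, hG, ⟨C, hC⟩, hH, hc⟩ := h
  refine ⟨fun x => w * u x, fun x => w * v x, fun x j => w * G x j, hu.const_mul w,
    hv.const_mul w, fun x j => mul_nonneg hw (hG x j),
    ⟨w * C, fun x j => mul_le_mul_of_nonneg_left (hC x j) hw⟩, fun x y => ?_, ?_⟩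
  · have := mul_le_mul_of_nonneg_left (hH x y) hw
    simp only [mul_assoc, ← Finset.mul_sum]
    linarith
  · rw [integral_const_mul, integral_const_mul, ← mul_add]
    exact mul_le_mul_of_nonneg_left hc hw

theorem Dom.sum {d : ℕ} {μ ν : Measure (Euc d)} {ι : Type} (s : Finset ι) (w : ι → ℝ)
    (hw : ∀ i, 0 ≤ w i) {H : ι → Euc d → Euc d → ℝ} {c : ι → ℝ}
    (h : ∀ i, Dom μ ν (H i) (c i)) :
    Dom μ ν (fun x y => ∑ i ∈ s, w i * H i x y) (∑ i ∈ s, w i * c i) := by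
  classical
  induction s using Finset.induction_on with
  | empty => simpa using Dom.zero μ ν
  | insert a s ha ih =>
    simp only [Finset.sum_insert ha]
    exact ((h a).mul (hw a)).add ih

theorem integrable_coord {d : ℕ} {μ : Measure (Euc d)} (h : FiniteFirstMoment μ) (j : Fin d) :
    Integrable (fun x : Euc d => x j) μ :=
  (EuclideanSpace.proj (𝕜 := ℝ) j : Euc d →L[ℝ] ℝ).integrable_comp h

theorem Dom.le {d : ℕ} {μ ν : Measure (Euc d)} [IsProbabilityMeasure μ] [IsProbabilityMeasure ν]
    (hμ : FiniteFirstMoment μ) (hν : FiniteFirstMoment ν) (hicx : IncConvexOrder μ ν)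
    {H : Euc d → Euc d → ℝ} {c : ℝ} (h : Dom μ ν H c) {m : ℝ} (hm : ∀ x y, m ≤ H x y) :
    m ≤ c := by
  obtain ⟨u, v, G, hu, hv, hG, ⟨C, hC⟩, hH, hc⟩ := h
  set A : Euc d → Euc d → ℝ := fun x y => m - u x - ∑ j, G x j * (x j - y j) with hA
  have hAv : ∀ x y, A x y ≤ v y := fun x y => by
    have := hm x y; have := hH x y; simp only [hA]; linarith
  have hbdd : ∀ y, BddAbove (Set.range fun x => A x y) := fun y =>
    ⟨v y, by rintro _ ⟨x, rfl⟩; exact hAv x y⟩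
  set φ : Euc d → ℝ := fun y => ⨆ x, A x y with hφ
  have hφv : ∀ y, φ y ≤ v y := fun y => ciSup_le fun x => hAv x y
  have hAφ : ∀ x y, A x y ≤ φ y := fun x y => le_ciSup (hbdd y) x
  have hconv : ConvexOn ℝ Set.univ φ := by
    refine ⟨convex_univ, fun y _ z _ s t hs ht hst => ciSup_le fun x => ?_⟩
    have e : A x (s • y + t • z) = s * A x y + t * A x z := by
      have : ∑ j, G x j * (x j - (s • y + t • z) j)
          = s * ∑ j, G x j * (x j - y j) + t * ∑ j, G x j * (x j - z j) := by
        rw [Finset.mul_sum, Finset.mul_sum, ← Finset.sum_add_distrib]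
        refine Finset.sum_congr rfl fun j _ => ?_
        simp only [PiLp.add_apply, PiLp.smul_apply, smul_eq_mul]
        have : x j = (s + t) * x j := by rw [hst, one_mul]
        linear_combination G x j * this
      simp only [hA, this]
      linear_combination (-(m - u x)) * hst
    rw [e, smul_eq_mul, smul_eq_mul]
    exact add_le_add (mul_le_mul_of_nonneg_left (hAφ x y) hs)
      (mul_le_mul_of_nonneg_left (hAφ x z) ht)
  have hmono : CoordMono φ := by
    intro y z hyz
    refine ciSup_le fun x => le_trans ?_ (hAφ x z)
    simp only [hA]
    have := Finset.sum_le_sum fun j (_ : j ∈ Finset.univ) =>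
      mul_le_mul_of_nonneg_left (sub_le_sub_left (hyz j) (x j)) (hG x j)
    linarith
  have hcont : Continuous φ := continuous_of_convex hconv
  have hlip : ∀ y z, φ y ≤ φ z + C * ∑ j, |y j - z j| := by
    intro y z
    refine ciSup_le fun x => ?_
    have h1 := hAφ x z
    have h2 : ∑ j, G x j * (x j - z j) - ∑ j, G x j * (x j - y j) ≤ C * ∑ j, |y j - z j| := by
      rw [← Finset.sum_sub_distrib, Finset.mul_sum]
      refine Finset.sum_le_sum fun j _ => ?_
      calc _ = G x j * (y j - z j) := by ring
        _ ≤ G x j * |y j - z j| := mul_le_mul_of_nonneg_left (le_abs_self _) (hG x j)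
        _ ≤ _ := mul_le_mul_of_nonneg_right (hC x j) (abs_nonneg _)
    simp only [hA] at h1 ⊢
    linarith
  have hinteg : ∀ ρ : Measure (Euc d), IsProbabilityMeasure ρ → FiniteFirstMoment ρ →
      Integrable φ ρ := by
    intro ρ _ hρ
    have hi : Integrable (fun y : Euc d => |φ 0| + C * ∑ j, |y j|) ρ :=
      (integrable_const _).add
        ((integrable_finsetSum _ fun j _ => (integrable_coord hρ j).abs).const_mul C)
    refine hi.mono' hcont.aestronglyMeasurable (ae_of_all _ fun y => ?_)
    have h1 := hlip y 0
    have h2 := hlip 0 y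
    simp only [PiLp.zero_apply, sub_zero, zero_sub, abs_neg] at h1 h2
    rw [Real.norm_eq_abs, abs_le]
    constructor
    · linarith [neg_abs_le (φ 0)]
    · linarith [le_abs_self (φ 0)]
  have hiμ := hinteg μ inferInstance hμ
  have hiν := hinteg ν inferInstance hν
  have k1 := hicx φ hconv hmono hiμ hiν
  have k2 : ∫ y, φ y ∂ν ≤ ∫ y, v y ∂ν := integral_mono hiν hv hφv
  have k3 : ∫ x, (m - u x) ∂μ ≤ ∫ x, φ x ∂μ := by
    refine integral_mono ((integrable_const _).sub hu) hiμ fun x => ?_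
    have := hAφ x x
    simpa [hA] using this
  rw [integral_sub (integrable_const _) hu] at k3
  simp at k3
  linarith

/-- comparison on continuous test functions gives comparison on measurable sets -/
theorem set_le_of_cont_le {Ω A : Type} [MeasurableSpace Ω] [TopologicalSpace A]
    [TopologicalSpace.MetrizableSpace A] [MeasurableSpace A] [BorelSpace A]
    (Γ : Measure Ω) [IsProbabilityMeasure Γ] (T : Ω → A) (hT : Measurable T)
    (f1 f2 : Ω → ℝ) (h1 : Integrable f1 Γ) (h2 : Integrable f2 Γ)
    (p1 : ∀ ω, 0 ≤ f1 ω) (p2 : ∀ ω, 0 ≤ f2 ω) (m1 : Measurable f1) (m2 : Measurable f2)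
    (hle : ∀ g : C(A, ℝ), (∀ a, 0 ≤ g a) → (∀ a, g a ≤ 1) →
      ∫ ω, g (T ω) * f1 ω ∂Γ ≤ ∫ ω, g (T ω) * f2 ω ∂Γ)
    (B : Set A) (hB : MeasurableSet B) :
    ∫ ω in T ⁻¹' B, f1 ω ∂Γ ≤ ∫ ω in T ⁻¹' B, f2 ω ∂Γ := by
  let _ : MetricSpace A := TopologicalSpace.metrizableSpaceMetric A
  have main : ∀ f : Ω → ℝ, Integrable f Γ → (∀ ω, 0 ≤ f ω) → Measurable f →
      ∃ M : Measure A, IsFiniteMeasure M ∧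
        (∀ g : A → NNReal, Continuous g → (∀ a, g a ≤ 1) →
        ∫⁻ a, (g a : ENNReal) ∂M = ENNReal.ofReal (∫ ω, (g (T ω) : ℝ) * f ω ∂Γ)) ∧
        ∀ B, MeasurableSet B → M B = ENNReal.ofReal (∫ ω in T ⁻¹' B, f ω ∂Γ) := by
    intro f hf hp hmf
    have hdm : Measurable fun ω => ENNReal.ofReal (f ω) := hmf.ennreal_ofReal
    have hfin : IsFiniteMeasure (Γ.withDensity fun ω => ENNReal.ofReal (f ω)) :=
      isFiniteMeasure_withDensity_ofReal hf.2
    refine ⟨(Γ.withDensity fun ω => ENNReal.ofReal (f ω)).map T, inferInstance, ?_, ?_⟩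
    · intro g hg hg1
      have hgm : Measurable fun ω => (g (T ω) : ENNReal) :=
        (hg.measurable.comp hT).coe_nnreal_ennreal
      rw [lintegral_map (by fun_prop) hT,
        lintegral_withDensity_eq_lintegral_mul _ hdm hgm,
        ofReal_integral_eq_lintegral_ofReal]
      · refine lintegral_congr fun ω => ?_
        rw [mul_comm, ENNReal.ofReal_mul' (hp ω)]
        simp
      · refine hf.bdd_mul (c := 1) (hg.measurable.comp hT).coe_nnreal_real.aestronglyMeasurable
          (ae_of_all _ fun ω => ?_)
        simpa using hg1 (T ω)
      · exact ae_of_all _ fun ω => mul_nonneg (NNReal.coe_nonneg _) (hp ω)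
    · intro B hB
      rw [Measure.map_apply hT hB, withDensity_apply _ (hT hB),
        ofReal_integral_eq_lintegral_ofReal hf.integrableOn (ae_of_all _ hp)]
  obtain ⟨M1, _, a1, b1⟩ := main f1 h1 p1 m1
  obtain ⟨M2, _, a2, b2⟩ := main f2 h2 p2 m2
  have hclosed : ∀ F, IsClosed F → M1 F ≤ M2 F := by
    intro F hF
    have l1 : ∀ n, M1 F ≤ ∫⁻ a, (hF.apprSeq n a : ENNReal) ∂M2 := by
      intro n
      have hg1 : ∀ a, hF.apprSeq n a ≤ 1 := HasOuterApproxClosed.apprSeq_apply_le_one hF n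
      refine (HasOuterApproxClosed.measure_le_lintegral hF M1 n).trans ?_
      rw [a1 _ (hF.apprSeq n).continuous hg1, a2 _ (hF.apprSeq n).continuous hg1]
      refine ENNReal.ofReal_le_ofReal ?_
      exact hle ⟨fun a => (hF.apprSeq n a : ℝ), by fun_prop⟩ (fun a => NNReal.coe_nonneg _)
        (fun a => by simpa using hg1 a)
    exact ge_of_tendsto' (HasOuterApproxClosed.tendsto_lintegral_apprSeq hF M2) l1
  have hall : M1 B ≤ M2 B := by
    rw [hB.measure_eq_iSup_isClosed_of_ne_top (measure_ne_top M1 B)]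
    exact iSup₂_le fun F hFB => iSup_le fun hF => (hclosed F hF).trans (measure_mono hFB)
  rw [b1 B hB, b2 B hB] at hall
  exact (ENNReal.ofReal_le_ofReal_iff (integral_nonneg p2)).1 hall

/-- compactification of Euclidean space -/
abbrev Abar (d : ℕ) : Type := Fin d → EReal

def emb {d : ℕ} (x : Euc d) : Abar d := fun i => ((x i : ℝ) : EReal)

def ret {d : ℕ} (a : Abar d) : Euc d := WithLp.toLp 2 fun i => (a i).toReal

theorem ret_emb {d : ℕ} (x : Euc d) : ret (emb x) = x := by
  ext i; simp [ret, emb]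

theorem continuous_emb {d : ℕ} : Continuous (emb (d := d)) :=
  continuous_pi fun i => continuous_coe_real_ereal.comp (by fun_prop)

theorem measurable_ret {d : ℕ} : Measurable (ret (d := d)) := by
  refine (WithLp.measurable_toLp 2 _).comp ?_
  exact measurable_pi_lambda _ fun i => measurable_ereal_toReal.comp (measurable_pi_apply i)

theorem measurable_emb {d : ℕ} : Measurable (emb (d := d)) := continuous_emb.measurable

theorem tr_bounds (N : ℕ) (a : EReal) :
    max ((-(N : ℝ) : ℝ) : EReal) (min a ((N : ℝ) : EReal)) ∈ ({⊥, ⊤}ᶜ : Set EReal) := by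
  simp only [Set.mem_compl_iff, Set.mem_insert_iff, Set.mem_singleton_iff, not_or]
  constructor
  · exact ne_of_gt (lt_of_lt_of_le (EReal.bot_lt_coe _) (le_max_left _ _))
  · refine ne_of_lt (max_lt (EReal.coe_lt_top _) (lt_of_le_of_lt (min_le_right _ _)
      (EReal.coe_lt_top _)))

/-- truncation -/
def tr (N : ℕ) : C(EReal, ℝ) :=
  ⟨fun a => (max ((-(N : ℝ) : ℝ) : EReal) (min a ((N : ℝ) : EReal))).toReal,
    EReal.continuousOn_toReal.comp_continuous (by fun_prop) (tr_bounds N)⟩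

theorem tr_coe (N : ℕ) (r : ℝ) : tr N (r : EReal) = max (-(N : ℝ)) (min r N) := by
  have : max ((-(N : ℝ) : ℝ) : EReal) (min (r : EReal) ((N : ℝ) : EReal))
      = ((max (-(N : ℝ)) (min r N) : ℝ) : EReal) := by
    rw [EReal.coe_strictMono.monotone.map_max, EReal.coe_strictMono.monotone.map_min]
  simp only [tr, ContinuousMap.coe_mk, this, EReal.toReal_coe]

/-- truncation remainder -/
def rem (N : ℕ) (r : ℝ) : ℝ := max (|r| - N) 0

theorem rem_nonneg (N : ℕ) (r : ℝ) : 0 ≤ rem N r := le_max_right _ _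

theorem rem_le (N : ℕ) (r : ℝ) : rem N r ≤ |r| := by
  have := abs_nonneg r
  have : (0 : ℝ) ≤ N := Nat.cast_nonneg N
  exact max_le (by linarith) (abs_nonneg r)

theorem tr_rem (N : ℕ) (r : ℝ) : |r - tr N (r : EReal)| ≤ rem N r := by
  rw [tr_coe, rem]
  have hN : (0 : ℝ) ≤ N := Nat.cast_nonneg N
  rcases le_total r N with h | h
  · rw [min_eq_left h]
    rcases le_total (-(N : ℝ)) r with h' | h'
    · rw [max_eq_right h']; simp
    · rw [max_eq_left h']
      refine le_max_of_le_left ?_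
      rw [abs_of_nonpos (by linarith : r ≤ 0), abs_of_nonpos (by linarith)]
      linarith
  · rw [min_eq_right h, max_eq_right (by linarith)]
    refine le_max_of_le_left ?_
    rw [abs_of_nonneg (by linarith : 0 ≤ r), abs_of_nonneg (by linarith)]

theorem continuous_rem (N : ℕ) : Continuous (rem N) := by
  unfold rem; fun_prop

theorem integrable_rem {Ω : Type} [MeasurableSpace Ω] {μ : Measure Ω} {f : Ω → ℝ}
    (hf : Integrable f μ) (N : ℕ) : Integrable (fun ω => rem N (f ω)) μ :=
  hf.abs.mono' ((continuous_rem N).comp_aestronglyMeasurable hf.1)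
    (ae_of_all _ fun ω => by
      rw [Real.norm_eq_abs, abs_of_nonneg (rem_nonneg _ _)]; exact rem_le _ _)

theorem tendsto_rem {Ω : Type} [MeasurableSpace Ω] {μ : Measure Ω} {f : Ω → ℝ}
    (hf : Integrable f μ) : Tendsto (fun N : ℕ => ∫ ω, rem N (f ω) ∂μ) atTop (nhds 0) := by
  have := tendsto_integral_of_dominated_convergence (μ := μ)
    (F := fun (N : ℕ) ω => rem N (f ω)) (f := fun _ => 0) (fun ω => |f ω|)
    (fun N => (integrable_rem hf N).1) hf.abs
    (fun N => ae_of_all _ fun ω => by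
      rw [Real.norm_eq_abs, abs_of_nonneg (rem_nonneg _ _)]; exact rem_le _ _)
    (ae_of_all _ fun ω => by
      obtain ⟨M, hM⟩ := exists_nat_gt |f ω|
      refine tendsto_const_nhds.congr' ?_
      filter_upwards [eventually_ge_atTop M] with N hN
      have : (M : ℝ) ≤ N := by exact_mod_cast hN
      rw [rem, max_eq_right (by linarith)])
  simpa using this

/-- dense sequence of test functions -/
def dn (d : ℕ) : ℕ → C(Abar d, ℝ) := TopologicalSpace.denseSeq C(Abar d, ℝ)

/-- clamp to the unit interval -/
def clamp {d : ℕ} (f : C(Abar d, ℝ)) : C(Abar d, ℝ) :=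
  ⟨fun a => max 0 (min (f a) 1), by fun_prop⟩

theorem clamp_nonneg {d : ℕ} (f : C(Abar d, ℝ)) (a : Abar d) : 0 ≤ clamp f a :=
  le_max_left _ _

theorem clamp_le {d : ℕ} (f : C(Abar d, ℝ)) (a : Abar d) : clamp f a ≤ 1 :=
  max_le zero_le_one (min_le_right _ _)

abbrev Idx (d : ℕ) : Type := (ℕ × Bool) ⊕ ((ℕ × Bool) ⊕ (ℕ × ℕ × Fin d))

def sgn (b : Bool) : ℝ := if b then 1 else -1

def hcon {d : ℕ} : Idx d → C(Abar d × Abar d, ℝ)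
  | Sum.inl (k, s) => ⟨fun z => sgn s * dn d k z.1, by fun_prop⟩
  | Sum.inr (Sum.inl (k, s)) => ⟨fun z => sgn s * dn d k z.2, by fun_prop⟩
  | Sum.inr (Sum.inr (k, N, i)) =>
      ⟨fun z => clamp (dn d k) z.1 * (tr N (z.1 i) - tr N (z.2 i)), by fun_prop⟩

def bcon {d : ℕ} (μ ν : Measure (Euc d)) : Idx d → ℝ
  | Sum.inl (k, s) => sgn s * ∫ x, dn d k (emb x) ∂μ
  | Sum.inr (Sum.inl (k, s)) => sgn s * ∫ y, dn d k (emb y) ∂ν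
  | Sum.inr (Sum.inr (_, N, i)) => ∫ x, rem N (x i) ∂μ + ∫ y, rem N (y i) ∂ν

theorem integrable_emb {d : ℕ} (μ : Measure (Euc d)) [IsProbabilityMeasure μ]
    (f : C(Abar d, ℝ)) : Integrable (fun x => f (emb x)) μ := by
  refine Integrable.of_bound (f.continuous.comp continuous_emb).aestronglyMeasurable ‖f‖
    (ae_of_all _ fun x => f.norm_coe_le_norm _)

theorem dom_con {d : ℕ} (μ ν : Measure (Euc d)) [IsProbabilityMeasure μ] [IsProbabilityMeasure ν]
    (hμ : FiniteFirstMoment μ) (hν : FiniteFirstMoment ν) (i : Idx d) :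
    Dom μ ν (fun x y => hcon i (emb x, emb y)) (bcon μ ν i) := by
  classical
  rcases i with ⟨k, s⟩ | ⟨k, s⟩ | ⟨k, N, i⟩
  · refine ⟨fun x => sgn s * dn d k (emb x), fun _ => 0, fun _ _ => 0,
      (integrable_emb μ _).const_mul _, integrable_zero _ _ _, fun _ _ => le_rfl,
      ⟨0, fun _ _ => le_rfl⟩, fun x y => ?_, ?_⟩
    · simp [hcon]
    · simp [bcon, integral_const_mul]
  · refine ⟨fun _ => 0, fun x => sgn s * dn d k (emb x), fun _ _ => 0,
      integrable_zero _ _ _, (integrable_emb ν _).const_mul _, fun _ _ => le_rfl,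
      ⟨0, fun _ _ => le_rfl⟩, fun x y => ?_, ?_⟩
    · simp [hcon]
    · simp [bcon, integral_const_mul]
  · refine ⟨fun x => rem N (x i), fun y => rem N (y i),
      fun x j => if j = i then clamp (dn d k) (emb x) else 0,
      integrable_rem (integrable_coord hμ i) N, integrable_rem (integrable_coord hν i) N,
      fun x j => ?_, ⟨1, fun x j => ?_⟩, fun x y => ?_, le_rfl⟩
    · dsimp only; split_ifs; exacts [clamp_nonneg _ _, le_rfl]
    · dsimp only; split_ifs; exacts [clamp_le _ _, zero_le_one]
    · simp only [hcon, ContinuousMap.coe_mk, ite_mul, zero_mul, Finset.sum_ite_eq',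
        Finset.mem_univ, if_true]
      have h1 := abs_le.1 (tr_rem N (x i))
      have h2 := abs_le.1 (tr_rem N (y i))
      have h3 := clamp_nonneg (dn d k) (emb x)
      have h4 := clamp_le (dn d k) (emb x)
      have h5 := rem_nonneg N (x i)
      have h6 := rem_nonneg N (y i)
      change clamp (dn d k) (emb x) * (tr N ((x i : ℝ) : EReal) - tr N ((y i : ℝ) : EReal)) ≤ _
      nlinarith [mul_le_mul_of_nonneg_left h1.1 h3, mul_le_mul_of_nonneg_left h2.2 h3]

theorem feasible {d : ℕ} (μ ν : Measure (Euc d)) [IsProbabilityMeasure μ]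
    [IsProbabilityMeasure ν] (hμ : FiniteFirstMoment μ) (hν : FiniteFirstMoment ν)
    (hicx : IncConvexOrder μ ν) :
    ∃ l : ProbabilityMeasure (Abar d × Abar d),
      ∀ i, ∫ z, hcon i z ∂(l : Measure (Abar d × Abar d)) ≤ bcon μ ν i := by
  rw [feas_iff]
  intro w
  have hcont : Continuous (fun z : Abar d × Abar d => ∑ i ∈ w.support, (w i : ℝ) * hcon i z) := by
    fun_prop
  obtain ⟨z0, -, hz0⟩ := isCompact_univ.exists_isMinOn Set.univ_nonempty hcont.continuousOn
  refine ⟨z0, ?_⟩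
  exact (Dom.sum w.support (fun i => (w i : ℝ)) (fun i => Nat.cast_nonneg _)
    (dom_con μ ν hμ hν)).le hμ hν hicx fun x y => hz0 (Set.mem_univ (emb x, emb y))

theorem good_con {d : ℕ} (hd : 1 ≤ d) {S : Type} [MeasurableSpace S] (P Q : Kernel S (Euc d))
    [IsMarkovKernel P] [IsMarkovKernel Q] :
    IsGood (fun θ => {l : ProbabilityMeasure (Abar d × Abar d) |
      ∀ i, ∫ z, hcon i z ∂(l : Measure (Abar d × Abar d)) ≤ bcon (P θ) (Q θ) i}) := by
  obtain ⟨e, he⟩ := exists_surjective_nat (Idx d)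
  refine ⟨fun n => hcon (e n), fun n θ => bcon (P θ) (Q θ) (e n), fun n => ?_, fun θ => ?_⟩
  · have hk : ∀ (κ : Kernel S (Euc d)) [IsMarkovKernel κ] (f : Euc d → ℝ), Continuous f →
        Measurable fun θ => ∫ x, f x ∂(κ θ) := fun κ _ f hf =>
      (StronglyMeasurable.integral_kernel hf.stronglyMeasurable).measurable
    have hall : ∀ i : Idx d, Measurable fun θ => bcon (P θ) (Q θ) i := by
     rintro (⟨k, s⟩ | ⟨k, s⟩ | ⟨k, N, i⟩)
     · exact (hk P _ ((dn d k).continuous.comp continuous_emb)).const_mul _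
     · exact (hk Q _ ((dn d k).continuous.comp continuous_emb)).const_mul _
     · have hc : Continuous fun x : Euc d => rem N (x i) :=
         (continuous_rem N).comp (by fun_prop)
       exact (hk P _ hc).add (hk Q _ hc)
    exact hall (e n)
  · ext l
    simp only [Set.mem_ofPred_eq]
    exact he.forall

theorem dense_approx {d : ℕ} (g : C(Abar d, ℝ)) {ε : ℝ} (hε : 0 < ε) :
    ∃ k, ∀ a, |dn d k a - g a| ≤ ε := by
  obtain ⟨k, hk⟩ := (TopologicalSpace.denseRange_denseSeq C(Abar d, ℝ)).exists_dist_lt g hε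
  refine ⟨k, fun a => ?_⟩
  have := ContinuousMap.dist_apply_le_dist (f := g) (g := dn d k) a
  rw [Real.dist_eq, abs_sub_comm] at this
  exact this.trans hk.le

theorem marg_eq {d : ℕ} (M1 M2 : Measure (Abar d)) [IsProbabilityMeasure M1]
    [IsProbabilityMeasure M2]
    (h : ∀ k, ∫ a, dn d k a ∂M1 = ∫ a, dn d k a ∂M2) : M1 = M2 := by
  refine ext_of_forall_integral_eq_of_IsFiniteMeasure fun f => ?_
  have hi : ∀ (M : Measure (Abar d)) [IsProbabilityMeasure M] (g : C(Abar d, ℝ)),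
      Integrable g M := fun M hM g => cint g ⟨M, hM⟩
  have hb : ∀ (M : Measure (Abar d)) [IsProbabilityMeasure M] (k : ℕ) (ε : ℝ),
      (∀ a, |dn d k a - f.toContinuousMap a| ≤ ε) →
      |∫ a, dn d k a ∂M - ∫ a, f a ∂M| ≤ ε := by
    intro M _ k ε hk
    change |∫ a, dn d k a ∂M - ∫ a, f.toContinuousMap a ∂M| ≤ ε
    rw [← integral_sub (hi M _) (hi M f.toContinuousMap)]
    have h3 := norm_integral_le_of_norm_le_const (μ := M) (C := ε)
      (f := fun a => dn d k a - f.toContinuousMap a)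
      (ae_of_all _ fun z => (Real.norm_eq_abs _).trans_le (hk z))
    simpa [Real.norm_eq_abs] using h3
  refine eq_of_abs_sub_le_all fun ε hε => ?_
  obtain ⟨k, hk⟩ := dense_approx f.toContinuousMap (half_pos hε)
  have h1 := abs_le.1 (hb M1 k _ hk)
  have h2 := abs_le.1 (hb M2 k _ hk)
  rw [h k] at h1
  rw [abs_le]
  constructor <;> linarith

theorem coupling_of_feasible {d : ℕ} (μ ν : Measure (Euc d)) [IsProbabilityMeasure μ]
    [IsProbabilityMeasure ν] (hμ : FiniteFirstMoment μ) (hν : FiniteFirstMoment ν)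
    (l : ProbabilityMeasure (Abar d × Abar d))
    (hl : ∀ i, ∫ z, hcon i z ∂(l : Measure (Abar d × Abar d)) ≤ bcon μ ν i) :
    IsCoupling ((l : Measure (Abar d × Abar d)).map (Prod.map ret ret)) μ ν ∧
    IsSubmartingaleCoupling ((l : Measure (Abar d × Abar d)).map (Prod.map ret ret)) := by
  set L : Measure (Abar d × Abar d) := (l : Measure (Abar d × Abar d)) with hL
  have hLp : IsProbabilityMeasure L := inferInstance
  have hrr : Measurable (Prod.map (ret (d := d)) (ret (d := d))) :=
    measurable_ret.prodMap measurable_ret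
  have hee : Measurable (Prod.map (emb (d := d)) (emb (d := d))) :=
    measurable_emb.prodMap measurable_emb
  set Γ : Measure (Euc d × Euc d) := L.map (Prod.map ret ret) with hΓ
  have hΓp : IsProbabilityMeasure Γ := Measure.isProbabilityMeasure_map hrr.aemeasurable
  have heq : ∀ a b : ℝ, (∀ s, sgn s * a ≤ sgn s * b) → a = b := by
    intro a b h
    have h1 := h true
    have h2 := h false
    simp only [sgn, if_true, Bool.false_eq_true, if_false] at h1 h2
    linarith
  have hm1 : L.map Prod.fst = μ.map emb := by
    have := Measure.isProbabilityMeasure_map (μ := L) measurable_fst.aemeasurable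
    have := Measure.isProbabilityMeasure_map (μ := μ) (measurable_emb (d := d)).aemeasurable
    refine marg_eq _ _ fun k => ?_
    rw [integral_map measurable_fst.aemeasurable (dn d k).continuous.aestronglyMeasurable,
      integral_map measurable_emb.aemeasurable (dn d k).continuous.aestronglyMeasurable]
    refine heq _ _ fun s => ?_
    have := hl (Sum.inl (k, s))
    simpa [hcon, bcon, integral_const_mul] using this
  have hm2 : L.map Prod.snd = ν.map emb := by
    have := Measure.isProbabilityMeasure_map (μ := L) measurable_snd.aemeasurable
    have := Measure.isProbabilityMeasure_map (μ := ν) (measurable_emb (d := d)).aemeasurable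
    refine marg_eq _ _ fun k => ?_
    rw [integral_map measurable_snd.aemeasurable (dn d k).continuous.aestronglyMeasurable,
      integral_map measurable_emb.aemeasurable (dn d k).continuous.aestronglyMeasurable]
    refine heq _ _ fun s => ?_
    have := hl (Sum.inr (Sum.inl (k, s)))
    simpa [hcon, bcon, integral_const_mul] using this
  have hre : ret ∘ emb = (id : Euc d → Euc d) := funext ret_emb
  have c1 : Γ.map Prod.fst = μ := by
    rw [hΓ, Measure.map_map measurable_fst hrr]
    change L.map (ret ∘ Prod.fst) = μ
    rw [← Measure.map_map measurable_ret measurable_fst, hm1,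
      Measure.map_map measurable_ret measurable_emb, hre, Measure.map_id]
  have c2 : Γ.map Prod.snd = ν := by
    rw [hΓ, Measure.map_map measurable_snd hrr]
    change L.map (ret ∘ Prod.snd) = ν
    rw [← Measure.map_map measurable_ret measurable_snd, hm2,
      Measure.map_map measurable_ret measurable_emb, hre, Measure.map_id]
  refine ⟨⟨c1, c2⟩, ?_⟩
  -- `L` is carried by the image of the embedding
  have hset : MeasurableSet {a : Abar d | emb (ret a) = a} :=
    measurableSet_eq_fun (measurable_emb.comp measurable_ret) measurable_id
  have ae_of : ∀ ρ : Measure (Euc d), ∀ᵐ a ∂(ρ.map emb), emb (ret a) = a := by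
    intro ρ
    rw [ae_map_iff measurable_emb.aemeasurable hset]
    exact ae_of_all _ fun x => by rw [ret_emb]
  have ae1 : ∀ᵐ z ∂L, emb (ret z.1) = z.1 := by
    have := ae_of μ
    rw [← hm1] at this
    exact ae_of_ae_map measurable_fst.aemeasurable this
  have ae2 : ∀ᵐ z ∂L, emb (ret z.2) = z.2 := by
    have := ae_of ν
    rw [← hm2] at this
    exact ae_of_ae_map measurable_snd.aemeasurable this
  have hΓint : ∀ h : C(Abar d × Abar d, ℝ),
      ∫ p, h (emb p.1, emb p.2) ∂Γ = ∫ z, h z ∂L := by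
    intro h
    have hm : Measurable fun p : Euc d × Euc d => h (emb p.1, emb p.2) :=
      h.continuous.measurable.comp hee
    rw [hΓ, integral_map hrr.aemeasurable hm.aestronglyMeasurable]
    refine integral_congr_ae ?_
    filter_upwards [ae1, ae2] with z hz1 hz2
    simp only [Prod.map_fst, Prod.map_snd, hz1, hz2]
  -- integrability
  have iX : ∀ i, Integrable (fun p : Euc d × Euc d => p.1 i) Γ := by
    intro i
    have : Integrable (fun x : Euc d => x i) (Γ.map Prod.fst) := by
      rw [c1]; exact integrable_coord hμ i
    exact this.comp_measurable measurable_fst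
  have iY : ∀ i, Integrable (fun p : Euc d × Euc d => p.2 i) Γ := by
    intro i
    have : Integrable (fun x : Euc d => x i) (Γ.map Prod.snd) := by
      rw [c2]; exact integrable_coord hν i
    exact this.comp_measurable measurable_snd
  have iV : Integrable (fun p : Euc d × Euc d => p.2) Γ := by
    have : Integrable (fun x : Euc d => x) (Γ.map Prod.snd) := by rw [c2]; exact hν
    exact this.comp_measurable measurable_snd
  have mX : ∀ i, Measurable (fun p : Euc d × Euc d => p.1 i) := fun i => by fun_prop
  have mY : ∀ i, Measurable (fun p : Euc d × Euc d => p.2 i) := fun i => by fun_prop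
  have hT : Measurable (fun p : Euc d × Euc d => emb p.1) := measurable_emb.comp measurable_fst
  have ig : ∀ (g : C(Abar d, ℝ)) (f : Euc d × Euc d → ℝ), Integrable f Γ →
      Integrable (fun p => g (emb p.1) * f p) Γ := by
    intro g f hf
    exact hf.bdd_mul (c := ‖g‖) (g.continuous.measurable.comp hT).aestronglyMeasurable
      (ae_of_all _ fun p => g.norm_coe_le_norm _)
  -- the test inequality for the countable family
  have test1 : ∀ i k,
      ∫ p, clamp (dn d k) (emb p.1) * (p.1 i - p.2 i) ∂Γ ≤ 0 := by
    intro i k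
    have hN : ∀ N : ℕ, ∫ p, clamp (dn d k) (emb p.1) * (p.1 i - p.2 i) ∂Γ
        ≤ 2 * (∫ p, rem N (p.1 i) ∂Γ + ∫ p, rem N (p.2 i) ∂Γ) := by
      intro N
      have h1 := hl (Sum.inr (Sum.inr (k, N, i)))
      rw [← hΓint] at h1
      have e1 : ∫ x, rem N (x i) ∂μ = ∫ p, rem N (p.1 i) ∂Γ := by
        rw [← c1, integral_map measurable_fst.aemeasurable]
        exact ((continuous_rem N).comp (by fun_prop)).aestronglyMeasurable
      have e2 : ∫ x, rem N (x i) ∂ν = ∫ p, rem N (p.2 i) ∂Γ := by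
        rw [← c2, integral_map measurable_snd.aemeasurable]
        exact ((continuous_rem N).comp (by fun_prop)).aestronglyMeasurable
      simp only [bcon, e1, e2] at h1
      have i1 := integrable_rem (iX i) N
      have i2 := integrable_rem (iY i) N
      have i3 : Integrable (fun p : Euc d × Euc d =>
          hcon (Sum.inr (Sum.inr (k, N, i))) (emb p.1, emb p.2)) Γ :=
        Integrable.of_bound
          (((hcon (Sum.inr (Sum.inr (k, N, i)))).continuous.measurable.comp
            hee).aestronglyMeasurable) ‖(hcon (Sum.inr (Sum.inr (k, N, i))) :
              C(Abar d × Abar d, ℝ))‖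
          (ae_of_all _ fun p => ContinuousMap.norm_coe_le_norm _ _)
      have h2 : ∫ p, clamp (dn d k) (emb p.1) * (p.1 i - p.2 i) ∂Γ ≤
          ∫ p, (hcon (Sum.inr (Sum.inr (k, N, i))) (emb p.1, emb p.2)
            + (rem N (p.1 i) + rem N (p.2 i))) ∂Γ := by
        refine integral_mono (ig _ _ ((iX i).sub (iY i))) (i3.add (i1.add i2)) fun p => ?_
        change _ ≤ clamp (dn d k) (emb p.1) *
          (tr N ((p.1 i : ℝ) : EReal) - tr N ((p.2 i : ℝ) : EReal)) + _
        have h1 := abs_le.1 (tr_rem N (p.1 i))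
        have h2 := abs_le.1 (tr_rem N (p.2 i))
        have h3 := clamp_nonneg (dn d k) (emb p.1)
        have h4 := clamp_le (dn d k) (emb p.1)
        have h5 := rem_nonneg N (p.1 i)
        have h6 := rem_nonneg N (p.2 i)
        have h7 := mul_le_mul_of_nonneg_right h4 h5
        have h8 := mul_le_mul_of_nonneg_right h4 h6
        have h9 := mul_le_mul_of_nonneg_left h1.2 h3
        have h10 := mul_le_mul_of_nonneg_left h2.1 h3
        nlinarith
      have i12 : Integrable (fun p : Euc d × Euc d => rem N (p.1 i) + rem N (p.2 i)) Γ :=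
        i1.add i2
      rw [integral_add i3 i12, integral_add i1 i2] at h2
      linarith
    have hlim := ((tendsto_rem (iX i)).add (tendsto_rem (iY i))).const_mul 2
    simp only [add_zero, mul_zero] at hlim
    exact ge_of_tendsto' hlim hN
  have test2 : ∀ i (g : C(Abar d, ℝ)), (∀ a, 0 ≤ g a) → (∀ a, g a ≤ 1) →
      ∫ p, g (emb p.1) * (p.1 i - p.2 i) ∂Γ ≤ 0 := by
    intro i g g0 g1
    set D : ℝ := ∫ p : Euc d × Euc d, |p.1 i - p.2 i| ∂Γ with hD
    have hD0 : 0 ≤ D := integral_nonneg fun _ => abs_nonneg _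
    have iD : Integrable (fun p : Euc d × Euc d => p.1 i - p.2 i) Γ := (iX i).sub (iY i)
    have hε : ∀ ε : ℝ, 0 < ε → ∫ p, g (emb p.1) * (p.1 i - p.2 i) ∂Γ ≤ ε * D := by
      intro ε hε
      obtain ⟨k, hk⟩ := dense_approx g hε
      have hcl : ∀ a, g a - clamp (dn d k) a ≤ ε ∧ - ε ≤ g a - clamp (dn d k) a := by
        intro a
        have h1 := abs_le.1 (hk a)
        have := g0 a
        have := g1 a
        simp only [clamp, ContinuousMap.coe_mk]
        rcases le_total (dn d k a) 1 with h | h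
        · rw [min_eq_left h]
          rcases le_total 0 (dn d k a) with h' | h'
          · rw [max_eq_right h']; constructor <;> linarith
          · rw [max_eq_left h']; constructor <;> linarith
        · rw [min_eq_right h, max_eq_right zero_le_one]; constructor <;> linarith
      have h2 : ∫ p, g (emb p.1) * (p.1 i - p.2 i) ∂Γ ≤
          ∫ p, (clamp (dn d k) (emb p.1) * (p.1 i - p.2 i) + ε * |p.1 i - p.2 i|) ∂Γ := by
        refine integral_mono (ig _ _ iD) ((ig _ _ iD).add (iD.abs.const_mul ε)) fun p => ?_
        have h3 : (g (emb p.1) - clamp (dn d k) (emb p.1)) * (p.1 i - p.2 i)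
            ≤ ε * |p.1 i - p.2 i| := by
          refine (le_abs_self _).trans ?_
          rw [abs_mul]
          refine mul_le_mul_of_nonneg_right ?_ (abs_nonneg _)
          exact abs_le.2 ⟨(hcl _).2, (hcl _).1⟩
        simp only
        linarith
      rw [integral_add (ig _ _ iD) (iD.abs.const_mul ε), integral_const_mul] at h2
      linarith [test1 i k]
    refine le_of_forall_pos_le_add fun ε hε' => ?_
    have hDp : 0 < D + 1 := by linarith
    refine (hε (ε / (D + 1)) (div_pos hε' hDp)).trans ?_
    rw [zero_add, div_mul_eq_mul_div, div_le_iff₀ hDp]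
    nlinarith
  have test3 : ∀ i (B : Set (Euc d)), MeasurableSet B →
      ∫ p in Prod.fst ⁻¹' B, p.1 i ∂Γ ≤ ∫ p in Prod.fst ⁻¹' B, p.2 i ∂Γ := by
    intro i B hB
    have i0 : Integrable (fun p : Euc d × Euc d => |p.1 i| + |p.2 i|) Γ :=
      (iX i).abs.add (iY i).abs
    have iA : Integrable (fun p : Euc d × Euc d => (|p.1 i| + |p.2 i|) + p.1 i) Γ :=
      i0.add (iX i)
    have iB : Integrable (fun p : Euc d × Euc d => (|p.1 i| + |p.2 i|) + p.2 i) Γ :=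
      i0.add (iY i)
    have := set_le_of_cont_le Γ (fun p : Euc d × Euc d => emb p.1) hT
      (fun p => (|p.1 i| + |p.2 i|) + p.1 i) (fun p => (|p.1 i| + |p.2 i|) + p.2 i)
      (i0.add (iX i)) (i0.add (iY i))
      (fun p => by
        have := neg_abs_le (p.1 i); have := abs_nonneg (p.2 i); linarith)
      (fun p => by
        have := neg_abs_le (p.2 i); have := abs_nonneg (p.1 i); linarith)
      (by fun_prop) (by fun_prop)
      (fun g g0 g1 => by
        rw [← sub_nonpos, ← integral_sub (ig g _ iA) (ig g _ iB)]
        refine le_trans (le_of_eq (integral_congr_ae (ae_of_all _ fun p => ?_))) (test2 i g g0 g1)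
        simp only
        ring)
      (ret ⁻¹' B) (measurable_ret hB)
    have hpre : (fun p : Euc d × Euc d => emb p.1) ⁻¹' (ret ⁻¹' B) = Prod.fst ⁻¹' B := by
      ext p
      simp [ret_emb]
    rw [hpre, integral_add i0.integrableOn (iX i).integrableOn,
      integral_add i0.integrableOn (iY i).integrableOn] at this
    linarith
  -- conditional expectation
  have hle := fstSigma_le d
  have final : ∀ i, ∀ᵐ p ∂Γ, p.1 i ≤ (Γ[fun q : Euc d × Euc d => q.2 | fstSigma d]) p i := by
    intro i
    have hcomm := (EuclideanSpace.proj (𝕜 := ℝ) i : Euc d →L[ℝ] ℝ).comp_condExp_comm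
      (m := fstSigma d) iV
    have hXm : StronglyMeasurable[fstSigma d] (fun p : Euc d × Euc d => p.1 i) := by
      have h1 : Measurable[fstSigma d] (Prod.fst : Euc d × Euc d → Euc d) :=
        comap_measurable _
      have h2 : Measurable (fun x : Euc d => x i) := by fun_prop
      exact (h2.comp h1).stronglyMeasurable
    have hCm : StronglyMeasurable[fstSigma d]
        (Γ[fun q : Euc d × Euc d => q.2 i | fstSigma d]) := stronglyMeasurable_condExp
    have hae : (fun p : Euc d × Euc d => p.1 i) ≤ᵐ[Γ.trim hle]
        (Γ[fun q : Euc d × Euc d => q.2 i | fstSigma d]) := by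
      refine ae_le_of_forall_setIntegral_le ((iX i).trim hle hXm)
        (integrable_condExp.trim hle hCm) fun s hs _ => ?_
      rw [← setIntegral_trim hle hXm hs, ← setIntegral_trim hle hCm hs,
        setIntegral_condExp hle (iY i) hs]
      obtain ⟨B, hB, rfl⟩ := hs
      exact test3 i B hB
    filter_upwards [hcomm, ae_le_of_ae_le_trim hae] with p hp1 hp2
    exact hp2.trans (le_of_eq hp1.symm)
  exact ae_all_iff.2 final

/-- Kernel version of Strassen's theorem (increasing convex order): P_θ ≤icx Q_θ for
all θ iff P and Q admit a pointwise submartingale coupling. -/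
theorem strassen_kernel_submartingale_coupling
    (d : ℕ) (hd : 1 ≤ d) {S : Type} [MeasurableSpace S]
    (P Q : Kernel S (Euc d)) [IsMarkovKernel P] [IsMarkovKernel Q]
    (hP : ∀ θ, FiniteFirstMoment (P θ)) (hQ : ∀ θ, FiniteFirstMoment (Q θ)) :
    (∀ θ, IncConvexOrder (P θ) (Q θ)) ↔
      ∃ R : Kernel S (Euc d × Euc d), IsMarkovKernel R ∧
        ∀ θ, IsCoupling (R θ) (P θ) (Q θ) ∧ IsSubmartingaleCoupling (R θ) := by
  constructor
  · intro h
    obtain ⟨R, hR, hm⟩ := selection (good_con hd P Q)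
      (fun θ => feasible (P θ) (Q θ) (hP θ) (hQ θ) (h θ))
    have hrr : Measurable (Prod.map (ret (d := d)) (ret (d := d))) :=
      measurable_ret.prodMap measurable_ret
    let κ : Kernel S (Abar d × Abar d) := ⟨fun θ => (R θ : Measure (Abar d × Abar d)), hm⟩
    have : IsMarkovKernel κ := ⟨fun θ => inferInstanceAs
      (IsProbabilityMeasure (R θ : Measure (Abar d × Abar d)))⟩
    refine ⟨κ.map (Prod.map ret ret), Kernel.IsMarkovKernel.map κ hrr, fun θ => ?_⟩
    rw [Kernel.map_apply κ hrr]
    exact coupling_of_feasible (P θ) (Q θ) (hP θ) (hQ θ) (R θ) (hR θ)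
  · rintro ⟨R, hR, h⟩ θ
    exact easy_dir (hQ θ) (R θ) (h θ).1 (h θ).2
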